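/- Let A be a ring which is free of finite rank as a ℤ-module. Then there exists a finite set Π of prime numbers such that for any two algebraically closed fields k and k', each of whose characteristic is either zero or a prime not belonging to Π, there is a bijection φ from the set of isomorphism classes of simple A ⊗_ℤ k-modules to the set of isomorphism classes of simple A ⊗_ℤ k'-modules with the following property: for all simple A ⊗_ℤ k-modules S and T, the multiplicity of T as a composition factor of a projective cover of S equals the multiplicity of φ(T) as a composition factor of a projective cover of φ(S). In other words, the Cartan matrices of A ⊗_ℤ k and A ⊗_ℤ k' coincide up to a simultaneous relabelling of the simple modules. -/

import Mathlib

open TensorProduct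

universe u

/-- A bundled module over a ring `R`. -/
structure BundledModule (R : Type u) [Ring R] : Type (u + 1) where
  carrier : Type u
  [isAddCommGroup : AddCommGroup carrier]
  [isModule : Module R carrier]

attribute [instance] BundledModule.isAddCommGroup BundledModule.isModule

instance (R : Type u) [Ring R] : CoeSort (BundledModule R) (Type u) :=
  ⟨BundledModule.carrier⟩

/-- The family `V` is a complete, pairwise non-isomorphic list of representatives of the
isomorphism classes of simple `R`-modules. -/
def IsCompleteListOfSimples (R : Type u) [Ring R] {ι : Type u}
    (V : ι → BundledModule R) : Prop :=
  (∀ i, IsSimpleModule R (V i)) ∧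
  (∀ i j : ι, i ≠ j → IsEmpty ((V i) ≃ₗ[R] (V j))) ∧
  (∀ (N : Type u) [AddCommGroup N] [Module R N],
    IsSimpleModule R N → ∃ i, Nonempty (N ≃ₗ[R] (V i)))

/-- `π : M → N` is a projective cover: `π` is surjective, `M` is projective, and no proper
submodule of `M` is mapped onto `N` by `π`. -/
def IsProjectiveCover {R : Type u} [Ring R] {M N : Type u} [AddCommGroup M] [AddCommGroup N]
    [Module R M] [Module R N] (π : M →ₗ[R] N) : Prop :=
  Function.Surjective π ∧ Module.Projective R M ∧
    ∀ W : Submodule R M, W ≠ ⊤ → Submodule.map π W ≠ ⊤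

/-- `M` has a composition series in which exactly `n` of the (simple) subquotients are
isomorphic to `T`; by the Jordan–Hölder theorem this `n` is the multiplicity of `T` as a
composition factor of `M`. -/
def HasCompositionFactorMult (R : Type u) [Ring R] (M : Type u) [AddCommGroup M] [Module R M]
    (T : Type u) [AddCommGroup T] [Module R T] (n : ℕ) : Prop :=
  ∃ (m : ℕ) (c : Fin (m + 1) → Submodule R M),
    c 0 = ⊥ ∧ c (Fin.last m) = ⊤ ∧
    (∀ i : Fin m, c i.castSucc ⋖ c i.succ) ∧
    n = Nat.card { i : Fin m //
      Nonempty ((↥(c i.succ) ⧸ (Submodule.comap (c i.succ).subtype (c i.castSucc))) ≃ₗ[R] T) }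


open scoped Pointwise

/-- A family of square matrix algebras, one for each `i`. -/
abbrev MatrixProd {ι : Type*} (κ : ι → Type*) (R : Type*) : Type _ :=
  ∀ i, Matrix (κ i) (κ i) R

/-- `G` presents the `R`-algebra `B` as an extension of a product of matrix algebras by a nilpotent
ideal, and the `e i` are idempotents lifting one diagonal matrix unit from each block. -/
structure IsSplitBasic {R B ι : Type*} [CommRing R] [Ring B] [Algebra R B] [Fintype ι]
    [DecidableEq ι] {κ : ι → Type*} [∀ i, Fintype (κ i)] [∀ i, DecidableEq (κ i)]
    (o : ∀ i, κ i) (G : B →ₐ[R] MatrixProd κ R) (e : ι → B) : Prop where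
  matrixUnit_mem_range : ∀ (i : ι) (p q : κ i), ∃ b, G b = Pi.single i (Matrix.single p q 1)
  nilpotent_ker : ∃ N : ℕ, ({b | G b = 0} : Set B) ^ N ⊆ {0}
  idem : ∀ i, IsIdempotentElem (e i)
  map_idem : ∀ i, G (e i) = Pi.single i (Matrix.single (o i) (o i) 1)

/-- The Peirce projection `x ↦ a * x * b`. -/
noncomputable def peirceMap (R : Type*) {B : Type*} [CommRing R] [Ring B] [Algebra R B] (a b : B) :
    B →ₗ[R] B :=
  LinearMap.mulLeft R a ∘ₗ LinearMap.mulRight R b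

@[simp]
theorem peirceMap_apply {R B : Type*} [CommRing R] [Ring B] [Algebra R B] (a b x : B) :
    peirceMap R a b x = a * (x * b) := rfl

set_option linter.unusedSectionVars false

section Field

variable {k B ι : Type*} [Field k] [Ring B] [Algebra k B] [Fintype ι] [DecidableEq ι]
  {κ : ι → Type*} [∀ i, Fintype (κ i)] [∀ i, DecidableEq (κ i)]

/-- The module of column vectors of the `i`-th block, with `B` acting through `G`. -/
def Column {κ : ι → Type*} [∀ i, Fintype (κ i)] [∀ i, DecidableEq (κ i)]
    (_ : B →ₐ[k] MatrixProd κ k) (i : ι) : Type _ :=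
  κ i → k

variable (G : B →ₐ[k] MatrixProd κ k) (i : ι)

instance : AddCommGroup (Column G i) := inferInstanceAs (AddCommGroup (κ i → k))

instance : Module k (Column G i) := inferInstanceAs (Module k (κ i → k))

instance : Module B (Column G i) :=
  Module.compHom (κ i → k)
    ((Matrix.toLinAlgEquiv' (R := k) (n := κ i)).toAlgHom.comp
      ((Pi.evalAlgHom k (fun i => Matrix (κ i) (κ i) k) i).comp G)).toRingHom

theorem Column.smul_def (b : B) (v : Column G i) : b • v = Matrix.mulVec (G b i) v := rfl

instance : IsScalarTower k B (Column G i) := by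
  refine ⟨fun c b v => ?_⟩
  rw [Column.smul_def, Column.smul_def, map_smul]
  exact Matrix.smul_mulVec c (G b i) v

/-- The standard basis vector of the column module. -/
def Column.std (p : κ i) : Column G i := (Pi.single p 1 : κ i → k)

theorem Column.std_apply_same (p : κ i) : Column.std G i p p = (1 : k) :=
  Pi.single_eq_same (M := fun _ => k) p 1

variable {G} {o : ∀ i, κ i} {e : ι → B}

theorem Column.matrixUnit_smul {b : B} {p q : κ i}
    (hb : G b = Pi.single i (Matrix.single p q 1)) (v : Column G i) :
    b • v = (v q : k) • Column.std G i p := by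
  rw [Column.smul_def, hb, Pi.single_eq_same]
  refine (Matrix.single_mulVec (x := (v : κ i → k)) p q 1).trans ?_
  ext x
  change _ = v q * (Pi.single p 1 : κ i → k) x
  simp [Pi.single_apply, Function.update_apply]

namespace IsSplitBasic

theorem isNilpotent (h : IsSplitBasic o G e) {x : B} (hx : G x = 0) : IsNilpotent x := by
  obtain ⟨N, hN⟩ := h.nilpotent_ker
  exact ⟨N, hN (Set.pow_mem_pow (show x ∈ {b | G b = 0} from hx))⟩

theorem idem_smul_same (h : IsSplitBasic o G e) (v : Column G i) :
    e i • v = (v (o i) : k) • Column.std G i (o i) :=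
  Column.matrixUnit_smul i (h.map_idem i) v

theorem idem_smul_of_ne (h : IsSplitBasic o G e) {i j : ι} (hij : i ≠ j) (v : Column G i) :
    e j • v = 0 := by
  rw [Column.smul_def, h.map_idem, Pi.single_eq_of_ne hij]
  exact Matrix.zero_mulVec (v : κ i → k)

theorem idem_smul_std (h : IsSplitBasic o G e) :
    e i • Column.std G i (o i) = Column.std G i (o i) := by
  rw [h.idem_smul_same, Column.std_apply_same, one_smul]

theorem exists_smul_std (h : IsSplitBasic o G e) (v : Column G i) :
    ∃ b : B, b • Column.std G i (o i) = v := by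
  choose b hb using fun p => h.matrixUnit_mem_range i p (o i)
  refine ⟨∑ p, (v p : k) • b p, ?_⟩
  rw [Finset.sum_smul]
  simp_rw [smul_assoc, Column.matrixUnit_smul i (hb _)]
  simp only [Column.std_apply_same, one_smul]
  refine funext fun x => ?_
  change (∑ p, v p • (Pi.single p 1 : κ i → k)) x = v x
  exact congrFun (pi_eq_sum_univ' (v : κ i → k)).symm x

theorem std_ne_zero (p : κ i) : Column.std G i p ≠ 0 := fun h =>
  one_ne_zero ((Column.std_apply_same G i p).symm.trans (congrFun h p))

theorem isSimpleModule (h : IsSplitBasic o G e) : IsSimpleModule B (Column G i) := by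
  have : Nontrivial (Column G i) := ⟨_, 0, std_ne_zero i (o i)⟩
  refine isSimpleModule_iff_toSpanSingleton_surjective.2 ⟨this, fun v hv w => ?_⟩
  obtain ⟨q, hq⟩ : ∃ q, (v q : k) ≠ 0 := by
    by_contra! H
    exact hv (funext H)
  obtain ⟨b, hb⟩ := h.matrixUnit_mem_range i (o i) q
  obtain ⟨c, hc⟩ := h.exists_smul_std i w
  refine ⟨c * ((v q : k)⁻¹ • b), ?_⟩
  rw [LinearMap.toSpanSingleton_apply, mul_smul, smul_assoc, Column.matrixUnit_smul i hb,
    smul_smul, inv_mul_cancel₀ hq, one_smul, hc]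

theorem isEmpty_linearEquiv (h : IsSplitBasic o G e) {i j : ι} (hij : i ≠ j) :
    IsEmpty (Column G i ≃ₗ[B] Column G j) := by
  refine ⟨fun f => std_ne_zero (G := G) i (o i) (f.injective ?_)⟩
  rw [map_zero, ← h.idem_smul_std i, map_smul, h.idem_smul_of_ne hij.symm]

theorem map_eq_zero_of_smul_std_eq_zero (h : IsSplitBasic o G e) {b : B} (hb : b * e i = b)
    (hs : b • Column.std G i (o i) = 0) : G b = 0 := by
  rw [← hb, map_mul, h.map_idem]
  funext j
  rw [Pi.mul_apply, Pi.zero_apply]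
  by_cases hj : j = i
  · subst hj
    rw [Pi.single_eq_same]
    have : (G b j).mulVec (Pi.single (o j) 1) = 0 := hs
    ext p q
    have hp := congrFun this p
    by_cases hq : q = o j
    · subst hq
      simpa using hp
    · simp [hq]
  · rw [Pi.single_eq_of_ne hj, mul_zero]

theorem exists_linearEquiv (h : IsSplitBasic o G e) (N : Type*) [AddCommGroup N] [Module B N]
    [IsSimpleModule B N] : ∃ i, Nonempty (N ≃ₗ[B] Column G i) := by
  have hJ : ∀ x : B, G x = 0 → ∀ v : N, x • v = 0 := fun x hx v => by
    by_contra hv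
    obtain ⟨b, hb⟩ := IsSimpleModule.toSpanSingleton_surjective B hv v
    have hu : IsUnit (1 - b * x) := (h.isNilpotent (by rw [map_mul, hx, mul_zero])).isUnit_one_sub
    have h0 : (1 - b * x) • v = 0 := by
      rw [sub_smul, one_smul, mul_smul, sub_eq_zero]
      exact hb.symm
    rw [hu.smul_eq_zero] at h0
    exact hv (by rw [h0, smul_zero])
  obtain ⟨i, v, hv⟩ : ∃ i, ∃ v : N, e i • v ≠ 0 := by
    by_contra! H
    choose b hb using h.matrixUnit_mem_range
    have key : G (1 - ∑ i, ∑ p, b i p (o i) * (e i * b i (o i) p)) = 0 := by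
      rw [map_sub, map_one, sub_eq_zero]
      simp only [map_sum, map_mul, hb, h.map_idem, ← Pi.single_mul, Matrix.single_mul_single_same,
        mul_one]
      funext j
      simp only [Finset.sum_apply, Pi.one_apply]
      rw [Finset.sum_eq_single j]
      · simp only [Pi.single_eq_same]
        exact Matrix.sum_single_one.symm
      · intro l _ hl
        simp [Pi.single_eq_of_ne hl.symm]
      · simp
    have := IsSimpleModule.nontrivial B N
    obtain ⟨v, hv⟩ := exists_ne (0 : N)
    apply hv
    have hv0 := hJ _ key v
    rw [sub_smul, one_smul, sub_eq_zero] at hv0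
    rw [hv0]
    simp [Finset.sum_smul, mul_smul, H]
  refine ⟨i, ?_⟩
  let f : B →ₗ[B] Column G i := LinearMap.toSpanSingleton B _ (Column.std G i (o i))
  have hf : Function.Surjective f := h.exists_smul_std i
  let g : B →ₗ[B] N := LinearMap.toSpanSingleton B _ (e i • v)
  have hfg : LinearMap.ker f ≤ LinearMap.ker g := fun x hx => by
    have hx' : x • Column.std G i (o i) = 0 := hx
    have h0 : G (x * e i) = 0 := by
      refine h.map_eq_zero_of_smul_std_eq_zero i ?_ ?_
      · rw [mul_assoc, (h.idem i).eq]
      · rw [mul_smul, h.idem_smul_std, hx']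
    change x • e i • v = 0
    rw [← mul_smul, hJ _ h0]
  let φ : Column G i →ₗ[B] N :=
    ((LinearMap.ker f).liftQ g hfg) ∘ₗ (f.quotKerEquivOfSurjective hf).symm.toLinearMap
  have hφ : φ ≠ 0 := fun h0 => hv <| by
    have : φ (f 1) = g 1 := by
      have : (f.quotKerEquivOfSurjective hf).symm (f 1) = Submodule.Quotient.mk 1 := by
        rw [LinearEquiv.symm_apply_eq]; rfl
      simp only [φ, LinearMap.comp_apply, LinearEquiv.coe_coe, this]
      rfl
    rw [h0, LinearMap.zero_apply] at this
    simpa [g] using this.symm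
  have := h.isSimpleModule i
  exact ⟨(LinearEquiv.ofBijective φ (LinearMap.bijective_of_ne_zero hφ)).symm⟩

end IsSplitBasic

section Multiplicity

variable {M : Type*} [AddCommGroup M] [Module B M] [Module k M] [IsScalarTower k B M]

/-- The `k`-subspace `a • W` of a `B`-module, for a submodule `W`. -/
noncomputable def smulSubspace (k : Type*) {B M : Type*} [Field k] [Ring B] [Algebra k B]
    [AddCommGroup M] [Module B M] [Module k M] [IsScalarTower k B M] (a : B)
    (W : Submodule B M) : Submodule k M :=
  (W.restrictScalars k).map (Algebra.lsmul k k M a)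

theorem mem_smulSubspace {a : B} {W : Submodule B M} {x : M} :
    x ∈ smulSubspace k a W ↔ ∃ y ∈ W, a • y = x := by
  simp [smulSubspace]

theorem mem_smulSubspace_of_idem {a : B} (ha : IsIdempotentElem a) {W : Submodule B M} {x : M} :
    x ∈ smulSubspace k a W ↔ x ∈ W ∧ a • x = x := by
  rw [mem_smulSubspace]
  constructor
  · rintro ⟨y, hy, rfl⟩
    exact ⟨W.smul_mem a hy, by rw [← mul_smul, ha.eq]⟩
  · rintro ⟨hx, h⟩
    exact ⟨x, hx, h⟩

theorem smulSubspace_mono (a : B) {W₁ W₂ : Submodule B M} (hW : W₁ ≤ W₂) :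
    smulSubspace k a W₁ ≤ smulSubspace k a W₂ :=
  Submodule.map_mono hW

theorem finrank_smulSubspace_of_surjective [FiniteDimensional k M] {N : Type*} [AddCommGroup N]
    [Module B N] [Module k N] [IsScalarTower k B N] {a : B} (ha : IsIdempotentElem a)
    {W₁ W₂ : Submodule B M} (hW : W₁ ≤ W₂) (f : W₂ →ₗ[B] N) (hf : Function.Surjective f)
    (hker : LinearMap.ker f = W₁.comap W₂.subtype) :
    Module.finrank k (smulSubspace k a W₂) =
      Module.finrank k (smulSubspace k a W₁) +
        Module.finrank k (smulSubspace k a (⊤ : Submodule B N)) := by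
  have hle : ∀ x ∈ smulSubspace k a W₂, x ∈ W₂ := fun x hx =>
    ((mem_smulSubspace_of_idem ha).1 hx).1
  let g : smulSubspace k a W₂ →ₗ[k] N :=
    (f.restrictScalars k) ∘ₗ
      (LinearMap.codRestrict (W₂.restrictScalars k) (smulSubspace k a W₂).subtype
        fun x => hle x x.2)
  have hg : ∀ x, g x = f ⟨x, hle x x.2⟩ := fun _ => rfl
  have hrange : LinearMap.range g = smulSubspace k a (⊤ : Submodule B N) := by
    ext y
    rw [mem_smulSubspace_of_idem ha]
    constructor
    · rintro ⟨x, rfl⟩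
      refine ⟨trivial, ?_⟩
      rw [hg, ← map_smul]
      congr 1
      exact Subtype.ext ((mem_smulSubspace_of_idem ha).1 x.2).2
    · rintro ⟨-, hy⟩
      obtain ⟨x, rfl⟩ := hf y
      refine ⟨⟨a • (x : M), mem_smulSubspace.2 ⟨x, x.2, rfl⟩⟩, ?_⟩
      rw [hg, ← hy, ← map_smul]
      rfl
  have hk : LinearMap.ker g = (smulSubspace k a W₁).comap (smulSubspace k a W₂).subtype := by
    ext x
    have hx : g x = 0 ↔ (x : M) ∈ W₁ := by
      rw [hg, ← LinearMap.mem_ker, hker]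
      rfl
    rw [LinearMap.mem_ker, hx, Submodule.mem_comap, mem_smulSubspace_of_idem ha]
    exact ⟨fun h => ⟨h, ((mem_smulSubspace_of_idem ha).1 x.2).2⟩, fun h => h.1⟩
  rw [← LinearMap.finrank_range_add_finrank_ker g, hrange, hk, add_comm]
  congr 1
  exact (Submodule.comapSubtypeEquivOfLe (smulSubspace_mono a hW)).finrank_eq

theorem IsSplitBasic.finrank_smulSubspace_column (h : IsSplitBasic o G e) (j l : ι) :
    Module.finrank k (smulSubspace k (e j) (⊤ : Submodule B (Column G l))) =
      if l = j then 1 else 0 := by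
  split_ifs with hl
  · subst hl
    have : smulSubspace k (e l) (⊤ : Submodule B (Column G l)) =
        Submodule.span k {Column.std G l (o l)} := by
      ext x
      rw [mem_smulSubspace, Submodule.mem_span_singleton]
      constructor
      · rintro ⟨y, -, rfl⟩
        exact ⟨_, (h.idem_smul_same l y).symm⟩
      · rintro ⟨c, rfl⟩
        refine ⟨c • Column.std G l (o l), trivial, ?_⟩
        rw [smul_comm, h.idem_smul_std]
    rw [this, finrank_span_singleton (std_ne_zero l (o l))]
  · have : smulSubspace k (e j) (⊤ : Submodule B (Column G l)) = ⊥ := by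
      rw [eq_bot_iff]
      intro x hx
      obtain ⟨y, -, rfl⟩ := mem_smulSubspace.1 hx
      rw [h.idem_smul_of_ne hl]
      exact Submodule.zero_mem _
    rw [this, finrank_bot]

theorem IsSplitBasic.finrank_smulSubspace_of_covBy (h : IsSplitBasic o G e)
    [FiniteDimensional k M] (j : ι) {W₁ W₂ : Submodule B M} (hW : W₁ ⋖ W₂)
    [Decidable (Nonempty ((W₂ ⧸ W₁.comap W₂.subtype) ≃ₗ[B] Column G j))] :
    Module.finrank k (smulSubspace k (e j) W₂) =
      Module.finrank k (smulSubspace k (e j) W₁) +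
        if Nonempty ((W₂ ⧸ W₁.comap W₂.subtype) ≃ₗ[B] Column G j) then 1 else 0 := by
  have : IsSimpleModule B (W₂ ⧸ W₁.comap W₂.subtype) := (covBy_iff_quot_is_simple hW.le).1 hW
  obtain ⟨l, ⟨f⟩⟩ := h.exists_linearEquiv (W₂ ⧸ W₁.comap W₂.subtype)
  rw [finrank_smulSubspace_of_surjective (h.idem j) hW.le
    (f.toLinearMap ∘ₗ (W₁.comap W₂.subtype).mkQ)
    (f.surjective.comp (Submodule.mkQ_surjective _))
    (by rw [LinearMap.ker_comp, LinearEquiv.ker, ← LinearMap.ker, Submodule.ker_mkQ]),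
    h.finrank_smulSubspace_column]
  congr 1
  refine if_congr ⟨?_, ?_⟩ rfl rfl
  · rintro rfl
    exact ⟨f⟩
  · rintro ⟨g⟩
    by_contra hlj
    exact (h.isEmpty_linearEquiv hlj).false (f.symm.trans g)

theorem Fin.eq_sum_of_succ {m : ℕ} (f : Fin (m + 1) → ℕ) (δ : Fin m → ℕ) (h0 : f 0 = 0)
    (hs : ∀ i : Fin m, f i.succ = f i.castSucc + δ i) : f (Fin.last m) = ∑ i, δ i := by
  induction m with
  | zero => simpa using h0
  | succ m ih =>
    rw [Fin.sum_univ_castSucc, ← ih (fun i => f i.castSucc) (fun i => δ i.castSucc) h0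
      fun i => by simpa using hs i.castSucc, ← Fin.succ_last, hs]

end Multiplicity

end Field

section Cartan

variable {k B : Type u} {ι : Type} [Field k] [Ring B] [Algebra k B] [Fintype ι] [DecidableEq ι]
  {κ : ι → Type} [∀ i, Fintype (κ i)] [∀ i, DecidableEq (κ i)]
  {G : B →ₐ[k] MatrixProd κ k} {o : ∀ i, κ i} {e : ι → B}

theorem IsSplitBasic.hasCompositionFactorMult_iff (h : IsSplitBasic o G e) [FiniteDimensional k B]
    {M : Type u} [AddCommGroup M] [Module B M] [Module k M] [IsScalarTower k B M]
    [FiniteDimensional k M] (j : ι) (n : ℕ) :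
    HasCompositionFactorMult B M (Column G j) n ↔
      n = Module.finrank k (smulSubspace k (e j) (⊤ : Submodule B M)) := by
  classical
  have key : ∀ (m : ℕ) (c : Fin (m + 1) → Submodule B M), c 0 = ⊥ → c (Fin.last m) = ⊤ →
      (∀ i : Fin m, c i.castSucc ⋖ c i.succ) →
      Nat.card { i : Fin m // Nonempty ((↥(c i.succ) ⧸
        (Submodule.comap (c i.succ).subtype (c i.castSucc))) ≃ₗ[B] Column G j) } =
        Module.finrank k (smulSubspace k (e j) (⊤ : Submodule B M)) := by
    intro m c h0 h1 hc
    rw [← h1, Fin.eq_sum_of_succ (fun i => Module.finrank k (smulSubspace k (e j) (c i))) _ ?_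
      fun i => h.finrank_smulSubspace_of_covBy j (hc i), Nat.card_eq_fintype_card,
      Fintype.card_subtype, Finset.card_filter]
    have : smulSubspace k (e j) (⊥ : Submodule B M) = ⊥ := by
      ext x
      simp [mem_smulSubspace, eq_comm]
    simp [h0, this]
  constructor
  · rintro ⟨m, c, h0, h1, hc, rfl⟩
    exact key m c h0 h1 hc
  · rintro rfl
    have : IsNoetherian B M := isNoetherian_of_tower k inferInstance
    have : IsArtinian B M := isArtinian_of_tower k inferInstance
    obtain ⟨s, h0, h1⟩ := exists_compositionSeries_of_isNoetherian_isArtinian B M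
    exact ⟨s.length, s.toFun, h0, h1, s.step, (key _ _ h0 h1 s.step).symm⟩

theorem IsSplitBasic.exists_generator (h : IsSplitBasic o G e) {i : ι} {P : Type*}
    [AddCommGroup P] [Module B P] [Module.Projective B P] (π : P →ₗ[B] Column G i)
    (hπ : Function.Surjective π) (hmin : ∀ W : Submodule B P, W ≠ ⊤ → Submodule.map π W ≠ ⊤) :
    ∃ p : P, e i • p = p ∧ (∀ x : P, ∃ b : B, b • p = x) ∧
      ∀ b : B, b * e i = b → b • p = 0 → b = 0 := by
  obtain ⟨p₀, hp₀⟩ := hπ (Column.std G i (o i))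
  have hep : e i • e i • p₀ = e i • p₀ := by rw [← mul_smul, (h.idem i).eq]
  have hπp : π (e i • p₀) = Column.std G i (o i) := by rw [map_smul, hp₀, h.idem_smul_std]
  generalize e i • p₀ = p at hep hπp
  let f : B →ₗ[B] P := LinearMap.toSpanSingleton B P p
  have hf : Function.Surjective f := by
    rw [← LinearMap.range_eq_top]
    by_contra hW
    refine hmin _ hW (eq_top_iff.2 fun v _ => ?_)
    obtain ⟨b, hb⟩ := h.exists_smul_std i v
    exact ⟨b • p, ⟨b, rfl⟩, by rw [map_smul, hπp, hb]⟩
  obtain ⟨s, hs⟩ := Module.projective_lifting_property f LinearMap.id hf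
  have hsf : ∀ x, s x • p = x := fun x => LinearMap.congr_fun hs x
  refine ⟨p, hep, hf, fun b hb hbp => ?_⟩
  have hG : G (s p * e i - e i) = 0 := by
    refine h.map_eq_zero_of_smul_std_eq_zero i ?_ ?_
    · rw [sub_mul, mul_assoc, (h.idem i).eq]
    · rw [← hπp, ← map_smul, sub_smul, mul_smul, hep, hsf, sub_self, map_zero]
  have hu : IsUnit (1 + (s p * e i - e i)) := (h.isNilpotent hG).isUnit_one_add
  have hbs : b * s p = 0 := by
    have := map_smul s b p
    rwa [hbp, map_zero, smul_eq_mul, eq_comm] at this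
  have h0 : b * (1 + (s p * e i - e i)) = 0 := by
    rw [mul_add, mul_sub, ← mul_assoc, hbs, hb]
    simp
  exact hu.mul_left_eq_zero.1 h0

theorem IsSplitBasic.hasCompositionFactorMult_projectiveCover_iff (h : IsSplitBasic o G e)
    [FiniteDimensional k B] {i : ι} (j : ι) {P : Type u} [AddCommGroup P] [Module B P]
    {π : P →ₗ[B] Column G i} (hπ : IsProjectiveCover π) (n : ℕ) :
    HasCompositionFactorMult B P (Column G j) n ↔
      n = Module.finrank k (LinearMap.range (peirceMap k (e j) (e i))) := by
  let _ : Module k P := Module.compHom P (algebraMap k B)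
  have : IsScalarTower k B P := ⟨fun c b x => by
    change (c • b) • x = algebraMap k B c • b • x
    rw [Algebra.smul_def, mul_smul]⟩
  have := hπ.2.1
  obtain ⟨p, hep, hgen, hinj⟩ := h.exists_generator π hπ.1 hπ.2.2
  have : FiniteDimensional k P :=
    Module.Finite.of_surjective ((LinearMap.toSpanSingleton B P p).restrictScalars k) hgen
  rw [h.hasCompositionFactorMult_iff j n]
  let φ : LinearMap.range (peirceMap k (e j) (e i)) →ₗ[k] P :=
    ((LinearMap.toSpanSingleton B P p).restrictScalars k) ∘ₗ Submodule.subtype _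
  have hφi : Function.Injective φ := by
    rw [← LinearMap.ker_eq_bot, LinearMap.ker_eq_bot']
    rintro ⟨_, b, rfl⟩ hb
    exact Subtype.ext (hinj _ (by simp only [peirceMap_apply, mul_assoc, (h.idem i).eq]) hb)
  have hr : LinearMap.range φ = smulSubspace k (e j) (⊤ : Submodule B P) := by
    have hb : ∀ b : B, peirceMap k (e j) (e i) b • p = e j • b • p := fun b => by
      rw [peirceMap_apply, mul_smul, mul_smul, hep]
    ext x
    rw [mem_smulSubspace]
    constructor
    · rintro ⟨⟨_, b, rfl⟩, rfl⟩
      exact ⟨b • p, trivial, (hb b).symm⟩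
    · rintro ⟨y, -, rfl⟩
      obtain ⟨b, rfl⟩ := hgen y
      exact ⟨⟨_, b, rfl⟩, hb b⟩
  rw [← hr, LinearMap.finrank_range_of_inj hφi]

/-- The column modules, bundled. -/
def columnModule (G : B →ₐ[k] MatrixProd κ k) (i : ι) : BundledModule B := ⟨Column G i⟩

theorem IsSplitBasic.isCompleteListOfSimples (h : IsSplitBasic o G e) :
    IsCompleteListOfSimples B fun i : ULift.{u} ι => columnModule G i.down := by
  refine ⟨fun i => h.isSimpleModule i.down, fun i j hij => ?_, fun N _ _ _ => ?_⟩
  · exact h.isEmpty_linearEquiv fun h => hij (ULift.ext _ _ h)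
  · obtain ⟨i, hi⟩ := h.exists_linearEquiv N
    exact ⟨⟨i⟩, hi⟩

end Cartan

section Rank

open Polynomial

variable {τ : Type*} [Fintype τ] [DecidableEq τ]

theorem det_one_add_X_smul_toMatrix_of_isIdempotentElem {k V : Type*} [Field k] [AddCommGroup V]
    [Module k V] (b : Module.Basis τ k V) {θ : V →ₗ[k] V} (hθ : IsIdempotentElem θ) :
    (1 + (X : k[X]) • (LinearMap.toMatrix b b θ).map C).det =
      (1 + X) ^ Module.finrank k (LinearMap.range θ) := by
  have : FiniteDimensional k V := b.finiteDimensional_of_finite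
  let c := Module.finBasis k (LinearMap.range θ)
  have h₁ : LinearMap.toMatrix b b θ = LinearMap.toMatrix c b (LinearMap.range θ).subtype *
      LinearMap.toMatrix b c θ.rangeRestrict := by
    rw [← LinearMap.toMatrix_comp]
    rfl
  have h₂ : LinearMap.toMatrix b c θ.rangeRestrict *
      LinearMap.toMatrix c b (LinearMap.range θ).subtype = 1 := by
    rw [← LinearMap.toMatrix_comp, ← LinearMap.toMatrix_id c]
    congr 1
    ext ⟨_, x, rfl⟩
    exact LinearMap.congr_fun hθ x
  rw [h₁, Matrix.map_mul, ← Matrix.smul_mul, Matrix.det_one_add_mul_comm, Matrix.mul_smul,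
    ← Matrix.map_mul, h₂]
  rw [Matrix.map_one _ C_0 C_1, ← one_smul k[X] (1 : Matrix _ _ k[X]), smul_smul, mul_one,
    ← add_smul, Matrix.det_smul, Matrix.det_one, mul_one, Fintype.card_fin]

theorem exists_det_one_add_X_smul_eq {R : Type*} [CommRing R] [IsDomain R] {T : Matrix τ τ R}
    (hT : IsIdempotentElem T) :
    ∃ r : ℕ, (1 + (X : R[X]) • T.map C).det = (1 + X) ^ r := by
  let F := FractionRing R
  have hT' : IsIdempotentElem (T.map (algebraMap R F)) := by
    rw [IsIdempotentElem, ← Matrix.map_mul, hT.eq]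
  let b := Pi.basisFun F τ
  have h := det_one_add_X_smul_toMatrix_of_isIdempotentElem b
    (θ := Matrix.toLin b b (T.map (algebraMap R F)))
    (by rw [IsIdempotentElem, Module.End.mul_eq_comp, ← Matrix.toLin_mul, hT'.eq])
  refine ⟨_, map_injective (algebraMap R F) (IsFractionRing.injective R F) (Eq.trans ?_
    (h.trans (by simp; rfl)))⟩
  rw [LinearMap.toMatrix_toLin, ← coe_mapRingHom, RingHom.map_det]
  congr 1
  ext i j
  simp [Matrix.one_apply, apply_ite]

theorem finrank_range_eq_of_det_one_add_X_smul {R k V : Type*} [CommRing R] [Field k]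
    [AddCommGroup V] [Module k V] (φ : R →+* k) {T : Matrix τ τ R} {r : ℕ}
    (hr : (1 + (X : R[X]) • T.map C).det = (1 + X) ^ r) (b : Module.Basis τ k V)
    {θ : V →ₗ[k] V} (hθ : IsIdempotentElem θ) (hT : LinearMap.toMatrix b b θ = T.map φ) :
    Module.finrank k (LinearMap.range θ) = r := by
  have h := det_one_add_X_smul_toMatrix_of_isIdempotentElem b hθ
  have h' : (1 + (X : k[X]) • (LinearMap.toMatrix b b θ).map C).det = (1 + X) ^ r := by
    rw [← show (((1 : R[X]) + X) ^ r).map φ = (1 + X) ^ r by simp, ← hr, hT, ← coe_mapRingHom,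
      RingHom.map_det]
    congr 1
    ext i j
    simp [Matrix.one_apply, apply_ite]
  have hd := congrArg natDegree (h.symm.trans h')
  rwa [show (1 + X : k[X]) = X + C 1 by rw [C_1, add_comm], natDegree_pow, natDegree_pow,
    natDegree_X_add_C, mul_one, mul_one] at hd

end Rank

section BaseChange

variable {R S B B' τ ι : Type*} [CommRing R] [CommRing S] [Ring B] [Ring B'] [Algebra R B]
  [Algebra S B'] [Fintype τ] [Fintype ι] [DecidableEq ι]
  {κ : ι → Type*} [∀ i, Fintype (κ i)] [∀ i, DecidableEq (κ i)] {o : ∀ i, κ i}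
  {G : B →ₐ[R] MatrixProd κ R} {G' : B' →ₐ[S] MatrixProd κ S} {e : ι → B}
  {φ : R →+* S} {β : B →+* B'}

theorem repr_map_basis (hβ : ∀ (r : R) x, β (r • x) = φ r • β x) (b : Module.Basis τ R B)
    (b' : Module.Basis τ S B') (hb : ∀ t, β (b t) = b' t) (x : B) (t : τ) :
    b'.repr (β x) t = φ (b.repr x t) := by
  classical
  have h : β x = ∑ s, φ (b.repr x s) • b' s := by
    rw [← congrArg β (b.sum_repr x), map_sum]
    simp only [hβ, hb]
  rw [h, b'.repr_sum_self]

theorem toMatrix_peirceMap_map [DecidableEq τ] (hβ : ∀ (r : R) x, β (r • x) = φ r • β x)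
    (b : Module.Basis τ R B) (b' : Module.Basis τ S B') (hb : ∀ t, β (b t) = b' t) (x y : B) :
    LinearMap.toMatrix b' b' (peirceMap S (β x) (β y)) =
      (LinearMap.toMatrix b b (peirceMap R x y)).map φ := by
  ext s t
  rw [Matrix.map_apply, LinearMap.toMatrix_apply, LinearMap.toMatrix_apply, peirceMap_apply,
    peirceMap_apply, ← hb, ← map_mul, ← map_mul, repr_map_basis hβ b b' hb]

theorem isIdempotentElem_peirceMap {x y : B} (hx : IsIdempotentElem x) (hy : IsIdempotentElem y) :
    IsIdempotentElem (peirceMap R x y) := by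
  refine LinearMap.ext fun z => ?_
  change x * (x * (z * y) * y) = x * (z * y)
  simp only [mul_assoc, hy.eq]
  rw [← mul_assoc, hx.eq]

theorem MatrixProd.eq_sum (M : MatrixProd κ R) :
    M = ∑ i, ∑ p, ∑ q, M i p q • (Pi.single i (Matrix.single p q 1) : MatrixProd κ R) := by
  funext i
  conv_lhs => rw [Matrix.matrix_eq_sum_single (M i)]
  simp only [Finset.sum_apply, Pi.smul_apply]
  rw [Finset.sum_eq_single i]
  · simp [Matrix.smul_single]
  · intro j _ hj
    simp [Pi.single_eq_of_ne hj.symm]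
  · simp

/-- Entrywise application of a ring homomorphism to a family of matrices. -/
def MatrixProd.map (κ : ι → Type*) [∀ i, Fintype (κ i)] [∀ i, DecidableEq (κ i)] (φ : R →+* S) :
    MatrixProd κ R →+* MatrixProd κ S :=
  RingHom.pi fun i => φ.mapMatrix.comp (Pi.evalRingHom _ i)

@[simp]
theorem MatrixProd.map_apply (φ : R →+* S) (M : MatrixProd κ R) (i : ι) (p q : κ i) :
    MatrixProd.map κ φ M i p q = φ (M i p q) := rfl

theorem MatrixProd.map_single (φ : R →+* S) (i : ι) (p q : κ i) :
    MatrixProd.map κ φ (Pi.single i (Matrix.single p q 1)) =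
      Pi.single i (Matrix.single p q 1) := by
  funext j
  by_cases h : j = i
  · subst h
    ext a b
    rw [MatrixProd.map_apply, Pi.single_eq_same, Pi.single_eq_same, Matrix.single_apply,
      Matrix.single_apply]
    split_ifs <;> simp
  · ext a b
    simp [Pi.single_eq_of_ne h]

theorem MatrixProd.map_injective (hφ : Function.Injective φ) :
    Function.Injective (MatrixProd.map κ φ) := fun M N h => by
  funext i
  ext p q
  exact hφ (congrFun (congrFun (congrFun h i) p) q)

theorem IsSplitBasic.of_injective (hφ : Function.Injective φ) (hβ : Function.Injective β)
    (hG : ∀ x, G' (β x) = MatrixProd.map κ φ (G x))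
    (h : IsSplitBasic o G' fun i => β (e i))
    (hu : ∀ (i : ι) (p q : κ i), ∃ b, G' (β b) = Pi.single i (Matrix.single p q 1)) :
    IsSplitBasic o G e where
  matrixUnit_mem_range i p q := by
    obtain ⟨b, hb⟩ := hu i p q
    refine ⟨b, MatrixProd.map_injective hφ ?_⟩
    rw [← hG, hb, MatrixProd.map_single]
  nilpotent_ker := by
    obtain ⟨N, hN⟩ := h.nilpotent_ker
    refine ⟨N, fun x hx => hβ ?_⟩
    rw [map_zero]
    apply hN
    have hsub : β '' {b | G b = 0} ⊆ {b | G' b = 0} := by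
      rintro _ ⟨b, hb, rfl⟩
      change G' (β b) = 0
      rw [hG, show G b = 0 from hb, map_zero]
    refine Set.pow_subset_pow_left hsub ?_
    rw [← Set.image_pow]
    exact ⟨x, hx, rfl⟩
  idem i := hβ (by rw [map_mul, (h.idem i).eq])
  map_idem i := MatrixProd.map_injective hφ (by rw [← hG, h.map_idem, MatrixProd.map_single])

theorem IsSplitBasic.baseChange (hβ : ∀ (r : R) x, β (r • x) = φ r • β x)
    (b : Module.Basis τ R B) (b' : Module.Basis τ S B') (hb : ∀ t, β (b t) = b' t)
    (hG : ∀ x, G' (β x) = MatrixProd.map κ φ (G x)) (h : IsSplitBasic o G e) :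
    IsSplitBasic o G' fun i => β (e i) where
  matrixUnit_mem_range i p q := by
    obtain ⟨x, hx⟩ := h.matrixUnit_mem_range i p q
    exact ⟨β x, by rw [hG, hx, MatrixProd.map_single]⟩
  nilpotent_ker := by
    obtain ⟨N, hN⟩ := h.nilpotent_ker
    choose u hu using h.matrixUnit_mem_range
    have hred : ∀ x, G (x - ∑ i, ∑ p, ∑ q, G x i p q • u i p q) = 0 := fun x => by
      rw [map_sub, sub_eq_zero]
      simp only [map_sum, map_smul, hu]
      exact MatrixProd.eq_sum (G x)
    have hspan : ∀ y : B', y - ∑ i, ∑ p, ∑ q, G' y i p q • β (u i p q) ∈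
        Submodule.span S (β '' {b | G b = 0}) := fun y => by
      have hy : y ∈ Submodule.span S (Set.range b') := by simp [b'.span_eq]
      induction hy using Submodule.span_induction with
      | mem y hy =>
        obtain ⟨t, rfl⟩ := hy
        refine Submodule.subset_span ⟨_, hred (b t), ?_⟩
        simp only [← hb, map_sub, map_sum, hβ, hG, MatrixProd.map_apply]
      | zero => simp
      | add x y _ _ hx hy =>
        convert add_mem hx hy using 1
        simp only [map_add, Pi.add_apply, Matrix.add_apply, add_smul, Finset.sum_add_distrib]
        abel
      | smul c x _ hx =>
        convert Submodule.smul_mem _ c hx using 1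
        simp only [map_smul, Pi.smul_apply, Matrix.smul_apply, smul_eq_mul, mul_smul,
          Finset.smul_sum, smul_sub]
    refine ⟨N, fun y hy => ?_⟩
    have hsub : {y | G' y = 0} ⊆ (Submodule.span S (β '' {b | G b = 0}) : Set B') := by
      intro y hy
      have := hspan y
      simpa [show G' y = 0 from hy] using this
    have := Submodule.pow_subset_pow _ (Set.pow_subset_pow_left hsub hy)
    rw [Submodule.span_pow, ← Set.image_pow] at this
    have h0 : β '' ({b | G b = 0} ^ N) ⊆ {0} := by
      rintro _ ⟨x, hx, rfl⟩
      rw [show x = 0 from hN hx, map_zero]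
      rfl
    simpa using Submodule.span_mono h0 this
  idem i := by rw [IsIdempotentElem, ← map_mul, (h.idem i).eq]
  map_idem i := by rw [hG, h.map_idem, MatrixProd.map_single]

end BaseChange

section Existence

theorem exists_isSplitBasic (k : Type*) {B : Type*} [Field k] [IsAlgClosed k] [Ring B]
    [Algebra k B] [FiniteDimensional k B] :
    ∃ (n : ℕ) (d : Fin n → ℕ) (o : ∀ i, Fin (d i)) (G : B →ₐ[k] MatrixProd (fun i => Fin (d i)) k)
      (e : Fin n → B), IsSplitBasic o G e := by
  have : IsArtinianRing B := IsArtinianRing.of_finite k B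
  have : FiniteDimensional k (B ⧸ Ring.jacobson B) :=
    Module.Finite.of_surjective (Ideal.Quotient.mkₐ k (Ring.jacobson B)).toLinearMap
      Ideal.Quotient.mk_surjective
  have hss : IsSemisimpleRing (B ⧸ Ring.jacobson B) := IsSemiprimaryRing.isSemisimpleRing
  obtain ⟨n, d, hd, ⟨ψ⟩⟩ :=
    IsSemisimpleRing.exists_algEquiv_pi_matrix_of_isAlgClosed k (B ⧸ Ring.jacobson B)
  let G : B →ₐ[k] MatrixProd (fun i => Fin (d i)) k :=
    ψ.toAlgHom.comp (Ideal.Quotient.mkₐ k (Ring.jacobson B))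
  have hG : Function.Surjective G := ψ.surjective.comp Ideal.Quotient.mk_surjective
  have hker : ∀ b, G b = 0 ↔ b ∈ Ring.jacobson B := fun b => by
    rw [← Ideal.Quotient.eq_zero_iff_mem]
    exact map_eq_zero_iff ψ ψ.injective
  obtain ⟨N, hN⟩ : IsNilpotent (Ring.jacobson B) := IsSemiprimaryRing.isNilpotent
  have hmul : ∀ i, IsIdempotentElem
      (Pi.single i (Matrix.single 0 0 1) : MatrixProd (fun i => Fin (d i)) k) := fun i => by
    rw [IsIdempotentElem, ← Pi.single_mul, Matrix.single_mul_single_same, one_mul]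
  choose e he hGe using fun i => exists_isIdempotentElem_eq_of_ker_isNilpotent (G : B →+* _)
    (fun x hx => ⟨N, by
      have := Ideal.pow_mem_pow ((hker x).1 hx) N
      rwa [hN] at this⟩) _ (hG _) (hmul i)
  refine ⟨n, d, fun i => 0, G, e, fun i p q => hG _, ⟨N, ?_⟩, he, hGe⟩
  have hpow : ∀ m : ℕ, ({b | G b = 0} : Set B) ^ m ⊆ (Ring.jacobson B ^ m : Ideal B) := by
    intro m
    induction m with
    | zero =>
      rw [Submodule.pow_zero, Ideal.one_eq_top]
      exact Set.subset_univ _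
    | succ m ih =>
      rw [pow_succ, Submodule.pow_succ]
      rintro _ ⟨x, hx, y, hy, rfl⟩
      exact Ideal.mul_mem_mul (ih hx) ((hker y).1 hy)
  have := hpow N
  rwa [hN] at this

end Existence

section TensorInt

attribute [local instance] Algebra.TensorProduct.rightAlgebra

variable {A R S ι τ : Type*} [Ring A] [CommRing R] [CommRing S] [Fintype ι] [DecidableEq ι]
  {κ : ι → Type*} [∀ i, Fintype (κ i)] [∀ i, DecidableEq (κ i)]

/-- The `R`-algebra homomorphism out of `A ⊗ R` extending `g`. -/
noncomputable def tensorHom (g : A →+* MatrixProd κ R) : A ⊗[ℤ] R →ₐ[R] MatrixProd κ R :=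
  (Algebra.TensorProduct.lift (Algebra.ofId R (MatrixProd κ R)) g.toIntAlgHom
    fun r _ => Algebra.commute_algebraMap_left r _).comp
    (Algebra.TensorProduct.commRight ℤ R A).symm.toAlgHom

@[simp]
theorem tensorHom_tmul (g : A →+* MatrixProd κ R) (a : A) (r : R) :
    tensorHom g (a ⊗ₜ r) = r • g a := by
  rw [Algebra.smul_def, tensorHom, AlgHom.comp_apply]
  exact Algebra.TensorProduct.lift_tmul ..

/-- The change of scalars `A ⊗ R → A ⊗ S`. -/
noncomputable def tensorMap (A : Type*) [Ring A] (φ : R →+* S) : A ⊗[ℤ] R →+* A ⊗[ℤ] S :=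
  (Algebra.TensorProduct.map (AlgHom.id ℤ A) φ.toIntAlgHom).toRingHom

@[simp]
theorem tensorMap_tmul (φ : R →+* S) (a : A) (r : R) :
    tensorMap A φ (a ⊗ₜ r) = a ⊗ₜ φ r := rfl

theorem right_smul_tmul (a : A) (r s : R) : r • (a ⊗ₜ[ℤ] s) = a ⊗ₜ[ℤ] (r * s) := by
  rw [Algebra.smul_def, Algebra.TensorProduct.right_algebraMap_apply,
    Algebra.TensorProduct.tmul_mul_tmul, one_mul]

theorem tensorMap_smul (φ : R →+* S) (r : R) (x : A ⊗[ℤ] R) :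
    tensorMap A φ (r • x) = φ r • tensorMap A φ x := by
  rw [Algebra.smul_def, Algebra.smul_def, map_mul]
  congr 1

theorem tensorHom_tensorMap (φ : R →+* S) (g : A →+* MatrixProd κ R) (x : A ⊗[ℤ] R) :
    tensorHom ((MatrixProd.map κ φ).comp g) (tensorMap A φ x) =
      MatrixProd.map κ φ (tensorHom g x) := by
  induction x using TensorProduct.induction_on with
  | zero => simp
  | tmul a s =>
    rw [tensorMap_tmul, tensorHom_tmul, tensorHom_tmul]
    funext i
    ext p q
    simp
  | add x y hx hy => rw [map_add, map_add, hx, hy, map_add, map_add]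

theorem tensorHom_includeLeft (G : A ⊗[ℤ] R →ₐ[R] MatrixProd κ R) :
    tensorHom ((G : A ⊗[ℤ] R →+* MatrixProd κ R).comp
      Algebra.TensorProduct.includeLeftRingHom) = G := by
  ext x : 1
  induction x using TensorProduct.induction_on with
  | zero => simp
  | tmul a s =>
    rw [tensorHom_tmul]
    change s • G (a ⊗ₜ 1) = _
    rw [← map_smul, right_smul_tmul, mul_one]
  | add x y hx hy => rw [map_add, map_add, hx, hy]

/-- The basis of `A ⊗ R` induced by an integral basis of `A`. -/
noncomputable def tensorBasis (b : Module.Basis τ ℤ A) (R : Type*) [CommRing R] :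
    Module.Basis τ R (A ⊗[ℤ] R) :=
  (Algebra.TensorProduct.basis R b).map (Algebra.TensorProduct.commRight ℤ R A).toLinearEquiv

theorem tensorBasis_apply (b : Module.Basis τ ℤ A) (t : τ) :
    tensorBasis b R t = b t ⊗ₜ 1 := by
  rw [tensorBasis, Module.Basis.map_apply, Algebra.TensorProduct.basis_apply]
  rfl

theorem tensorMap_injective [Module.Free ℤ A] {φ : R →+* S} (hφ : Function.Injective φ) :
    Function.Injective (tensorMap A φ) :=
  Module.Flat.lTensor_preserves_injective_linearMap (M := A) φ.toIntAlgHom.toLinearMap hφ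

theorem exists_finite_forall_mem_range_tensorMap {K : Type*} [CommRing K] (x : A ⊗[ℤ] K) :
    ∃ T : Set K, T.Finite ∧ ∀ (R : Type) [CommRing R] (f : R →+* K), T ⊆ Set.range f →
      x ∈ Set.range (tensorMap A f) := by
  induction x using TensorProduct.induction_on with
  | zero => exact ⟨∅, Set.finite_empty, fun R _ f _ => ⟨0, map_zero _⟩⟩
  | tmul a s =>
    refine ⟨{s}, Set.finite_singleton s, fun R _ f h => ?_⟩
    obtain ⟨r, rfl⟩ := h rfl
    exact ⟨a ⊗ₜ r, tensorMap_tmul f a r⟩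
  | add x y hx hy =>
    obtain ⟨T, hT, hx⟩ := hx
    obtain ⟨T', hT', hy⟩ := hy
    refine ⟨T ∪ T', hT.union hT', fun R _ f h => ?_⟩
    obtain ⟨x, rfl⟩ := hx R f (Set.subset_union_left.trans h)
    obtain ⟨y, rfl⟩ := hy R f (Set.subset_union_right.trans h)
    exact ⟨x + y, map_add _ _ _⟩

end TensorInt

section Descent

theorem exists_subring_of_finite {K : Type} [Field K] [Algebra ℚ K] [Algebra.IsAlgebraic ℚ K]
    {T : Set K} (hT : T.Finite) :
    ∃ (R : Type) (_ : CommRing R) (_ : IsDomain R) (f : R →+* K) (N : ℕ),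
      Function.Injective f ∧ T ⊆ Set.range f ∧ N ≠ 0 ∧
      ∀ (k : Type u) [Field k] [IsAlgClosed k], (N : k) ≠ 0 → Nonempty (R →+* k) := by
  have : CharZero K := algebraRat.charZero K
  have hinj : Function.Injective (algebraMap ℤ K) := by
    rw [IsScalarTower.algebraMap_eq ℤ ℚ K]
    exact (algebraMap ℚ K).injective.comp Int.cast_injective
  have : Algebra.IsAlgebraic ℤ K :=
    (IsFractionRing.comap_isAlgebraic_iff (A := ℤ) (K := ℚ)).2 inferInstance
  obtain ⟨y, hy, hyT⟩ := Algebra.IsAlgebraic.exists_integral_multiples ℤ hT.toFinset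
  let O := integralClosure ℤ K
  let N : O := (y.natAbs : ℕ)
  have hy' : y.natAbs ≠ 0 := Int.natAbs_ne_zero.2 hy
  have hN0 : N ≠ 0 := Nat.cast_ne_zero.2 hy'
  have hu : IsUnit (O.val.toRingHom N) := by
    simp [N, hy]
  have hle : Submonoid.powers N ≤ nonZeroDivisors O :=
    powers_le_nonZeroDivisors_of_noZeroDivisors hN0
  let f : Localization.Away N →+* K := IsLocalization.Away.lift N hu
  refine ⟨Localization.Away N, inferInstance, IsLocalization.isDomain_localization hle, f,
    y.natAbs, ?_, ?_, hy', ?_⟩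
  · refine (IsLocalization.lift_injective_iff _).2 fun a b => ?_
    rw [(IsLocalization.injective _ hle).eq_iff]
    exact Subtype.val_injective.eq_iff.symm
  · intro t ht
    have hi : IsIntegral ℤ ((y.natAbs : K) * t) := by
      have := hyT t (by simpa using ht)
      rw [Algebra.smul_def] at this
      rcases Int.natAbs_eq y with h | h <;> rw [h] at this
      · simpa using this
      · simpa using this.neg
    refine ⟨algebraMap O _ ⟨_, hi⟩ * IsLocalization.Away.invSelf N, ?_⟩
    have h₁ : f (algebraMap O _ ⟨_, hi⟩) = (y.natAbs : K) * t :=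
      IsLocalization.Away.lift_eq N hu _
    have h₂ : f (algebraMap O _ N) = (y.natAbs : K) :=
      (IsLocalization.Away.lift_eq N hu _).trans (by simp [N])
    have h₃ := congrArg f (IsLocalization.Away.mul_invSelf (S := Localization.Away N) N)
    rw [map_mul, h₂, map_one] at h₃
    rw [map_mul, h₁, mul_right_comm, h₃, one_mul]
  · intro k _ _ hk
    let P : Ideal ℤ := RingHom.ker (Int.castRingHom k)
    have : P.IsPrime := RingHom.ker_isPrime _
    obtain ⟨Q, -, hQ, hQc⟩ := Ideal.exists_ideal_over_prime_of_isIntegral (S := O) P ⊥ (by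
        intro a ha
        have : algebraMap ℤ O a = 0 := ha
        have : a = 0 := hinj (by simpa using congrArg Subtype.val this)
        simp [this])
    have : Q.LiesOver P := ⟨hQc.symm⟩
    let : Algebra (ℤ ⧸ P) k := (RingHom.kerLift (Int.castRingHom k)).toAlgebra
    have : FaithfulSMul (ℤ ⧸ P) k := (faithfulSMul_iff_algebraMap_injective _ _).2
      (RingHom.kerLift_injective (Int.castRingHom k))
    have : Module.IsTorsionFree (ℤ ⧸ P) (O ⧸ Q) :=
      Module.isTorsionFree_iff_faithfulSMul.2 inferInstance
    let g : O →+* k := (IsAlgClosed.lift (R := ℤ ⧸ P) (S := O ⧸ Q) (M := k) :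
      (O ⧸ Q) →ₐ[ℤ ⧸ P] k).toRingHom.comp (Ideal.Quotient.mk Q)
    refine ⟨IsLocalization.Away.lift N (g := g) ?_⟩
    rw [map_natCast]
    exact hk.isUnit

end Descent

section Assembly

attribute [local instance] Algebra.TensorProduct.rightAlgebra

theorem RingHom.exists_comp_eq_of_forall_mem_range {A M N : Type*} [Ring A] [Ring M] [Ring N]
    {f : M →+* N} (hf : Function.Injective f) (g : A →+* N) (hg : ∀ a, g a ∈ f.range) :
    ∃ g' : A →+* M, f.comp g' = g := by
  let E : M ≃+* f.range := RingEquiv.ofBijective f.rangeRestrict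
    ⟨fun x y h => hf (congrArg Subtype.val h), f.rangeRestrict_surjective⟩
  refine ⟨(E.symm : f.range →+* M).comp (g.codRestrict f.range hg), ?_⟩
  ext a
  exact congrArg Subtype.val (E.apply_symm_apply ⟨g a, hg a⟩)

theorem exists_isSplitBasic_tensorHom (A : Type*) [Ring A] [Module.Free ℤ A] [Module.Finite ℤ A] :
    ∃ (n : ℕ) (d : Fin n → ℕ) (o : ∀ i, Fin (d i)) (R : Type) (_ : CommRing R) (_ : IsDomain R)
      (g : A →+* MatrixProd (fun i => Fin (d i)) R) (e : Fin n → A ⊗[ℤ] R) (N : ℕ),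
      IsSplitBasic o (tensorHom g) e ∧ N ≠ 0 ∧
      ∀ (k : Type u) [Field k] [IsAlgClosed k], (N : k) ≠ 0 → Nonempty (R →+* k) := by
  let K := AlgebraicClosure ℚ
  let : Algebra ℚ K := AlgebraicClosure.instAlgebra ℚ
  have : Algebra.IsAlgebraic ℚ K := AlgebraicClosure.isAlgebraic ℚ
  let b := Module.Free.chooseBasis ℤ A
  have : FiniteDimensional K (A ⊗[ℤ] K) := Module.Finite.of_basis (tensorBasis b K)
  obtain ⟨n, d, o, G₀, e₀, h₀⟩ := exists_isSplitBasic K (B := A ⊗[ℤ] K)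
  let g₀ : A →+* MatrixProd (fun i => Fin (d i)) K :=
    (G₀ : A ⊗[ℤ] K →+* MatrixProd (fun i => Fin (d i)) K).comp
      Algebra.TensorProduct.includeLeftRingHom
  choose u hu using h₀.matrixUnit_mem_range
  choose Te hTe hTe' using fun i => exists_finite_forall_mem_range_tensorMap (e₀ i)
  choose Tu hTu hTu' using fun i p q => exists_finite_forall_mem_range_tensorMap (u i p q)
  let Tg : Set K := Set.range
    fun s : Σ (_ : Module.Free.ChooseBasisIndex ℤ A) (i : Fin n), Fin (d i) × Fin (d i) =>
      g₀ (b s.1) s.2.1 s.2.2.1 s.2.2.2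
  obtain ⟨R, _, _, f, N, hf, hT, hN, hk⟩ := exists_subring_of_finite.{u}
    (T := (⋃ i, Te i) ∪ (⋃ i, ⋃ p, ⋃ q, Tu i p q) ∪ Tg)
    (((Set.finite_iUnion hTe).union (Set.finite_iUnion fun i => Set.finite_iUnion fun p =>
      Set.finite_iUnion fun q => hTu i p q)).union (Set.finite_range _))
  have hb : ∀ t, g₀ (b t) ∈ (MatrixProd.map (fun i => Fin (d i)) f).range := fun t => by
    choose m hm using fun i p q => hT (Or.inr ⟨⟨t, i, p, q⟩, rfl⟩)
    exact ⟨fun i => Matrix.of (m i), funext fun i => Matrix.ext fun p q => hm i p q⟩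
  obtain ⟨g, hg⟩ := RingHom.exists_comp_eq_of_forall_mem_range
    (MatrixProd.map_injective hf) g₀ fun a => by
      rw [← b.sum_repr a, map_sum]
      refine sum_mem fun t _ => ?_
      rw [map_zsmul]
      exact zsmul_mem (hb t) _
  have hcomm : ∀ x, G₀ (tensorMap A f x) = MatrixProd.map _ f (tensorHom g x) := fun x => by
    rw [← tensorHom_tensorMap, hg, show tensorHom g₀ = G₀ from tensorHom_includeLeft G₀]
    rfl
  choose e he using fun i => hTe' i R f ((Set.subset_iUnion Te i).trans
    ((Set.subset_union_left.trans Set.subset_union_left).trans hT))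
  refine ⟨n, d, o, R, _, ‹_›, g, e, N, ?_, hN, hk⟩
  refine IsSplitBasic.of_injective hf (tensorMap_injective hf) hcomm ?_ fun i p q => ?_
  · simpa only [he] using h₀
  · obtain ⟨x, hx⟩ := hTu' i p q R f fun t ht => hT
      (Or.inl (Or.inr (Set.mem_iUnion₂.2 ⟨i, p, Set.mem_iUnion.2 ⟨q, ht⟩⟩)))
    exact ⟨x, by rw [hx, hu]⟩

theorem exists_finrank_range_peirceMap_tensorMap_eq {A R : Type*} [Ring A] [Module.Free ℤ A]
    [Module.Finite ℤ A] [CommRing R] [IsDomain R] {x y : A ⊗[ℤ] R} (hx : IsIdempotentElem x)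
    (hy : IsIdempotentElem y) :
    ∃ r : ℕ, ∀ (k : Type u) [Field k] (φ : R →+* k),
      Module.finrank k (LinearMap.range (peirceMap k (tensorMap A φ x) (tensorMap A φ y))) = r := by
  classical
  let b := Module.Free.chooseBasis ℤ A
  obtain ⟨r, hr⟩ := exists_det_one_add_X_smul_eq
    (T := LinearMap.toMatrix (tensorBasis b R) (tensorBasis b R) (peirceMap R x y))
    (by rw [IsIdempotentElem, ← LinearMap.toMatrix_mul, (isIdempotentElem_peirceMap hx hy).eq])
  refine ⟨r, fun k _ φ => ?_⟩
  have hb : ∀ t, tensorMap A φ (tensorBasis b R t) = tensorBasis b k t := fun t => by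
    rw [tensorBasis_apply, tensorBasis_apply, tensorMap_tmul, map_one]
  exact finrank_range_eq_of_det_one_add_X_smul φ hr (tensorBasis b k)
    (isIdempotentElem_peirceMap (hx.map _) (hy.map _))
    (toMatrix_peirceMap_map (tensorMap_smul φ) _ _ hb x y)

theorem IsSplitBasic.tensorMap {A R S ι : Type*} [Ring A] [Module.Free ℤ A] [Module.Finite ℤ A]
    [CommRing R] [CommRing S] [Fintype ι] [DecidableEq ι] {κ : ι → Type*} [∀ i, Fintype (κ i)]
    [∀ i, DecidableEq (κ i)] {o : ∀ i, κ i} {g : A →+* MatrixProd κ R} {e : ι → A ⊗[ℤ] R}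
    (h : IsSplitBasic o (tensorHom g) e) (φ : R →+* S) :
    IsSplitBasic o (tensorHom ((MatrixProd.map κ φ).comp g)) fun i => tensorMap A φ (e i) :=
  h.baseChange (tensorMap_smul φ) (tensorBasis (Module.Free.chooseBasis ℤ A) R)
    (tensorBasis (Module.Free.chooseBasis ℤ A) S)
    (fun t => by rw [tensorBasis_apply, tensorBasis_apply, tensorMap_tmul, map_one])
    (tensorHom_tensorMap φ g)

theorem natCast_ne_zero_of_ringChar {k : Type*} [Field k] {N : ℕ} (hN : N ≠ 0)
    (h : ringChar k = 0 ∨ (Nat.Prime (ringChar k) ∧ ringChar k ∉ N.primeFactors)) :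
    (N : k) ≠ 0 := by
  intro h0
  have hd := (ringChar.spec k N).1 h0
  rcases h with h | ⟨hp, h⟩
  · rw [h, zero_dvd_iff] at hd
    exact hN hd
  · exact h (Nat.mem_primeFactors.2 ⟨hp, hd, hN⟩)

end Assembly
/-- Let `A` be a ring which is free of finite rank as a `ℤ`-module.  Then
there is a finite set `Pr` of primes such that for any two algebraically closed fields
`k`, `k'` whose characteristics are zero or primes outside `Pr`, the Cartan matrices of
`A ⊗ k` and `A ⊗ k'` coincide up to a simultaneous relabelling of the simple modules:
there are complete irredundant lists of simple modules over `A ⊗ k` and over `A ⊗ k'`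
indexed by a common type `ι` such that, for all `i j`, the multiplicity of the `j`-th
simple module in a projective cover of the `i`-th one is the same on both sides. -/
theorem cartan_matrix_independent_of_characteristic
    (A : Type u) [Ring A] [Module.Free ℤ A] [Module.Finite ℤ A] :
    ∃ Pr : Finset ℕ, (∀ p ∈ Pr, p.Prime) ∧
      ∀ (k k' : Type u) [Field k] [IsAlgClosed k] [Field k'] [IsAlgClosed k'],
        (ringChar k = 0 ∨ (Nat.Prime (ringChar k) ∧ ringChar k ∉ Pr)) →
        (ringChar k' = 0 ∨ (Nat.Prime (ringChar k') ∧ ringChar k' ∉ Pr)) →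
        ∃ (ι : Type u) (S : ι → BundledModule (A ⊗[ℤ] k)) (S' : ι → BundledModule (A ⊗[ℤ] k')),
          IsCompleteListOfSimples (A ⊗[ℤ] k) S ∧
          IsCompleteListOfSimples (A ⊗[ℤ] k') S' ∧
          ∀ i j : ι,
            ∀ (P : Type u) [AddCommGroup P] [Module (A ⊗[ℤ] k) P]
              (π : P →ₗ[A ⊗[ℤ] k] (S i)), IsProjectiveCover π →
            ∀ (P' : Type u) [AddCommGroup P'] [Module (A ⊗[ℤ] k') P']
              (π' : P' →ₗ[A ⊗[ℤ] k'] (S' i)), IsProjectiveCover π' →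
            ∀ n : ℕ,
              HasCompositionFactorMult (A ⊗[ℤ] k) P (S j) n ↔
                HasCompositionFactorMult (A ⊗[ℤ] k') P' (S' j) n := by
  obtain ⟨n, d, o, R, _, _, g, e, N, h, hN, hR⟩ := exists_isSplitBasic_tensorHom.{u} A
  refine ⟨N.primeFactors, fun p => Nat.prime_of_mem_primeFactors, fun k k' _ _ _ _ hk hk' => ?_⟩
  obtain ⟨φ⟩ := hR k (natCast_ne_zero_of_ringChar hN hk)
  obtain ⟨φ'⟩ := hR k' (natCast_ne_zero_of_ringChar hN hk')
  have hφ := h.tensorMap φ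
  have hφ' := h.tensorMap φ'
  have b := Module.Free.chooseBasis ℤ A
  let : Algebra R (A ⊗[ℤ] R) := Algebra.TensorProduct.rightAlgebra
  let : Algebra k (A ⊗[ℤ] k) := Algebra.TensorProduct.rightAlgebra
  let : Algebra k' (A ⊗[ℤ] k') := Algebra.TensorProduct.rightAlgebra
  have : FiniteDimensional k (A ⊗[ℤ] k) := Module.Finite.of_basis (tensorBasis b k)
  have : FiniteDimensional k' (A ⊗[ℤ] k') := Module.Finite.of_basis (tensorBasis b k')
  refine ⟨ULift (Fin n), _, _, hφ.isCompleteListOfSimples, hφ'.isCompleteListOfSimples,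
    fun i j P _ _ π hπ P' _ _ π' hπ' m => ?_⟩
  obtain ⟨r, hr⟩ := exists_finrank_range_peirceMap_tensorMap_eq.{u} (h.idem j.down) (h.idem i.down)
  refine (hφ.hasCompositionFactorMult_projectiveCover_iff j.down hπ m).trans
    (Iff.trans ?_ (hφ'.hasCompositionFactorMult_projectiveCover_iff j.down hπ' m).symm)
  rw [hr k φ, hr k' φ']
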